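/- Theorem 3.4: The total number of almost-square factors (counted as pairs (start position, length)) in any square-free word of length n ≥ 2 is less than 2n·log_{5/4}(n). -/

import Mathlib

/-- `E` is an extension of `W`: `W` with one letter inserted at some position. -/
def Extends {A : Type*} (W E : List A) : Prop :=
  ∃ (W₁ W₂ : List A) (x : A), W = W₁ ++ W₂ ∧ E = W₁ ++ x :: W₂

/-- `WW'` is an almost-square: `W'` is an extension of `W`, or `W'` is obtained
from `W` by deleting one letter (equivalently, `W` is an extension of `W'`). -/
def AlmostSq {A : Type*} (W W' : List A) : Prop :=
  Extends W W' ∨ Extends W' W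

/-- `U` contains a square (a nonempty factor of the form `X ++ X`). -/
def HasSquare {A : Type*} (U : List A) : Prop :=
  ∃ X : List A, X ≠ [] ∧ X ++ X <:+: U

def SquareFree {A : Type*} (U : List A) : Prop := ¬ HasSquare U

/-- `F` realizes the pattern `X Y₁ X Y₂ X ⋯ X Y_t X` (with `2*t+1` nonempty blocks,
all odd-indexed blocks equal to `X`). -/
def RealizesPat {A : Type*} (t : ℕ) (F : List A) : Prop :=
  ∃ (X : List A) (Y : Fin t → List A), X ≠ [] ∧ (∀ i, Y i ≠ []) ∧
    F = X ++ (List.ofFn (fun i => Y i ++ X)).flatten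

/-- `W` contains the pattern `X Y₁ X ⋯ X Y_t X`. -/
def ContainsPat {A : Type*} (t : ℕ) (W : List A) : Prop :=
  ∃ F : List A, F <:+: W ∧ RealizesPat t F

/-- `W` is extremal `X Y₁ X ⋯ X Y_t X`-avoiding over the alphabet `A`. -/
def ExtremalPat {A : Type*} (t : ℕ) (W : List A) : Prop :=
  ¬ ContainsPat t W ∧ ∀ E : List A, Extends W E → ContainsPat t E

/-- `W` is extremal square-free over the alphabet `A`. -/
def ExtremalSF {A : Type*} (W : List A) : Prop :=
  SquareFree W ∧ ∀ E : List A, Extends W E → HasSquare E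

/-!
Let an almost-square `W W'` of length `2k + 1` start at a fixed position of a square-free word,
with the inserted or deleted letter at index `a` of its half. The letters of `W` before index `a`
repeat at one of the distances `k`, `k + 1`, and its other letters, except the deleted one, at the
other. Suppose that two such almost-squares of the same kind, with half-lengths `k < l` and letters
at `a` and `b`, start at the same position. On each of the three intervals into which `a` and `b`
cut `[0, k)` the letters repeat at two distances that differ by `l - k` or `l - k ± 1`, so the
difference is a period of some factor. As there are no squares, such an interval is shorter than
the difference, and adding up the three bounds gives `k ≤ 3 (l - k)`. So the half-lengths of each
kind grow by a factor of at least `4 / 3` from one to the next, which leaves room for only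
logarithmically many of them.
-/

section Periods

variable {A : Type*} {L : List A} {p q s t e f : ℕ}

theorem SquareFree.of_infix {M : List A} (hM : SquareFree M) (h : L <:+: M) : SquareFree L :=
  fun ⟨X, hX, hXL⟩ => hM ⟨X, hX, hXL.trans h⟩

/-- The letters of `L` at the positions in `[s, e)` repeat at distance `p`, i.e. the factor of `L`
on `[s, e + p)` has period `p`. Since `L[i]?` is `none` beyond the end of `L`, that factor has its
full length only if `e + p ≤ L.length`. -/
def HasPeriodOn (L : List A) (p s e : ℕ) : Prop :=
  ∀ i, s ≤ i → i < e → L[i]? = L[i + p]?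

theorem HasPeriodOn.mono (h : HasPeriodOn L p s e) (hs : s ≤ t) (he : f ≤ e) :
    HasPeriodOn L p t f :=
  fun i hi hi' => h i (hs.trans hi) (hi'.trans_le he)

theorem HasPeriodOn.of_append_prefix {P P' X : List A} (h : P ++ X <+: L) (h' : P' ++ X <+: L)
    (hp : P'.length = P.length + p) : HasPeriodOn L p P.length (P.length + X.length) := by
  intro i hi hi'
  obtain ⟨j, rfl⟩ := Nat.exists_eq_add_of_le hi
  have hj : j < X.length := by omega
  have letter_eq {R : List A} (hR : R ++ X <+: L) : L[R.length + j]? = some X[j] := by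
    rw [List.prefix_iff_getElem?.1 hR (R.length + j) (by simpa using hj),
      List.getElem_append_right (by omega)]
    simp only [Nat.add_sub_cancel_left]
  rw [letter_eq h, Nat.add_right_comm, ← hp, letter_eq h']

theorem HasPeriodOn.sub (hp : HasPeriodOn L p s e) (hq : HasPeriodOn L q s e) (hpq : p ≤ q) :
    HasPeriodOn L (q - p) (s + p) (e + p) := by
  intro i hi hi'
  obtain ⟨j, rfl⟩ := Nat.exists_eq_add_of_le' (le_of_add_le_right hi)
  rw [← hp j (by omega) (by omega), hq j (by omega) (by omega)]
  congr 1
  omega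

theorem HasPeriodOn.hasSquare (h : HasPeriodOn L p s (s + p)) (hp : 0 < p)
    (hL : s + 2 * p ≤ L.length) : HasSquare L := by
  have halves_eq : (L.drop s).take p = ((L.drop s).drop p).take p := by
    refine List.ext_getElem? fun i => ?_
    simp only [List.getElem?_take, List.drop_drop, List.getElem?_drop]
    split_ifs with hi
    · rw [h (s + i) (by omega) (by omega), Nat.add_right_comm]
    · rfl
  have square_eq : (L.drop s).take p ++ (L.drop s).take p = (L.drop s).take (p + p) := by
    rw [List.take_add, ← halves_eq]
  refine ⟨(L.drop s).take p, ?_, ?_⟩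
  · rw [← List.length_pos_iff, List.length_take, List.length_drop]
    omega
  · rw [square_eq]
    exact (List.take_prefix _ _).isInfix.trans (List.drop_suffix _ _).isInfix

theorem SquareFree.lt_add_of_hasPeriodOn (hL : SquareFree L) (h : HasPeriodOn L p s e)
    (hp : 0 < p) (he : e + p ≤ L.length) : e < s + p := by
  by_contra! hle
  exact hL ((h.mono le_rfl hle).hasSquare hp (by omega))

theorem SquareFree.overlap_lt (hL : SquareFree L) (hp : HasPeriodOn L p s e)
    (hq : HasPeriodOn L q t f) (hpq : p < q) (hf : min e f + q ≤ L.length) :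
    min e f < max s t + (q - p) := by
  have hdiff := (hp.mono (le_max_left s t) (min_le_left e f)).sub
    (hq.mono (le_max_right s t) (min_le_right e f)) hpq.le
  have := hL.lt_add_of_hasPeriodOn hdiff (by omega) (by omega)
  omega

end Periods

section AlmostSquarePrefixes

variable {A : Type*} {L : List A} {k l : ℕ}

/-- `L` starts with an almost-square `W W'`, `|W| = k`, where `W'` is `W` with a letter inserted
at a position `a`. The case `a = 0` is left out: there `W W'` is also the almost-square obtained by
deleting the last letter of its first `k + 1` letters. -/
def InsertionPrefix (L : List A) (k : ℕ) : Prop :=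
  2 * k + 1 ≤ L.length ∧
    ∃ a, 0 < a ∧ a ≤ k ∧ HasPeriodOn L k 0 a ∧ HasPeriodOn L (k + 1) a k

/-- `L` starts with an almost-square `W W'`, `|W'| = k`, where `W'` is `W` with the letter at
position `a` deleted. The case `a = 0` is left out: there `W' W'` is a suffix of `W W'`, hence a
square if `k ≠ 0`. -/
def DeletionPrefix (L : List A) (k : ℕ) : Prop :=
  2 * k + 1 ≤ L.length ∧
    ∃ a, 0 < a ∧ a ≤ k ∧ HasPeriodOn L (k + 1) 0 a ∧ HasPeriodOn L k (a + 1) (k + 1)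

/-- The lengths of the almost-squares that `L` starts with. -/
def almostSqPrefixLengths (L : List A) : Set ℕ :=
  {m | ∃ W W' : List A, AlmostSq W W' ∧ (W ++ W').length = m ∧ W ++ W' <+: L}

theorem InsertionPrefix.mem_Icc (h : InsertionPrefix L k) :
    k ∈ Set.Icc 1 (L.length / 2) := by
  obtain ⟨hlen, a, ha, hak, -⟩ := h
  exact ⟨by omega, by omega⟩

theorem DeletionPrefix.mem_Icc (h : DeletionPrefix L k) :
    k ∈ Set.Icc 1 (L.length / 2) := by
  obtain ⟨hlen, a, ha, hak, -⟩ := h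
  exact ⟨by omega, by omega⟩

theorem InsertionPrefix.four_mul_le (hL : SquareFree L) (hk : InsertionPrefix L k)
    (hl : InsertionPrefix L l) (hkl : k < l) : 4 * k ≤ 3 * l := by
  obtain ⟨-, a, ha, hak, hk₁, hk₂⟩ := hk
  obtain ⟨hlen, b, hb, hbl, hl₁, hl₂⟩ := hl
  have left_lt := hL.overlap_lt hk₁ hl₁ hkl (by omega)
  have right_lt := hL.overlap_lt hk₂ hl₂ (by omega) (by omega)
  have hgap : k + 1 < l := by omega
  rcases lt_or_ge a b with hab | hba
  · have middle_lt := hL.overlap_lt hk₂ hl₁ hgap (by omega)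
    omega
  · have middle_lt := hL.overlap_lt hk₁ hl₂ (by omega) (by omega)
    omega

theorem DeletionPrefix.four_mul_le (hL : SquareFree L) (hk : DeletionPrefix L k)
    (hl : DeletionPrefix L l) (hkl : k < l) : 4 * k ≤ 3 * l := by
  obtain ⟨-, a, ha, hak, hk₁, hk₂⟩ := hk
  obtain ⟨hlen, b, hb, hbl, hl₁, hl₂⟩ := hl
  have left_lt := hL.overlap_lt hk₁ hl₁ (by omega) (by omega)
  have right_lt := hL.overlap_lt hk₂ hl₂ hkl (by omega)
  have hgap : k + 1 < l := by omega
  rcases lt_or_ge a b with hab | hba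
  · have middle_lt := hL.overlap_lt hk₂ hl₁ (by omega) (by omega)
    omega
  · have middle_lt := hL.overlap_lt hk₁ hl₂ hgap (by omega)
    omega

theorem insertionPrefix_or_deletionPrefix_of_prefix {U V : List A} {x : A}
    (h : (U ++ V) ++ (U ++ x :: V) <+: L) (hk : k = U.length + V.length) (hk₀ : 0 < k) :
    InsertionPrefix L k ∨ DeletionPrefix L k := by
  have hU : HasPeriodOn L k 0 U.length :=
    (HasPeriodOn.of_append_prefix (P := []) (P' := U ++ V) (X := U)
      (.trans ⟨V ++ (U ++ x :: V), by simp⟩ h) (.trans ⟨x :: V, by simp⟩ h)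
      (by simp [hk])).mono le_rfl (by simp)
  have hV : HasPeriodOn L (k + 1) U.length k :=
    (HasPeriodOn.of_append_prefix (P := U) (P' := U ++ V ++ U ++ [x]) (X := V)
      (.trans ⟨U ++ x :: V, by simp⟩ h) (.trans (by simp) h)
      (by simp; omega)).mono le_rfl hk.le
  have hlen : 2 * k + 1 ≤ L.length := by
    have := h.length_le
    simp only [List.length_append, List.length_cons] at this
    omega
  rcases Nat.eq_zero_or_pos U.length with hU₀ | hU₀
  · exact .inr ⟨hlen, k, hk₀, le_rfl, hU₀ ▸ hV, fun i hi hi' => by omega⟩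
  · exact .inl ⟨hlen, U.length, hU₀, by omega, hU, hV⟩

theorem SquareFree.deletionPrefix_of_prefix (hL : SquareFree L) {U V : List A} {x : A}
    (h : (U ++ x :: V) ++ (U ++ V) <+: L) (hk : k = U.length + V.length) (hk₀ : 0 < k) :
    DeletionPrefix L k := by
  have hU : HasPeriodOn L (k + 1) 0 U.length :=
    (HasPeriodOn.of_append_prefix (P := []) (P' := U ++ x :: V) (X := U)
      (.trans ⟨x :: V ++ (U ++ V), by simp⟩ h) (.trans ⟨V, by simp⟩ h)
      (by simp; omega)).mono le_rfl (by simp)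
  have hV : HasPeriodOn L k (U.length + 1) (k + 1) :=
    (HasPeriodOn.of_append_prefix (P := U ++ [x]) (P' := U ++ x :: V ++ U) (X := V)
      (.trans ⟨U ++ V, by simp⟩ h) (.trans (by simp) h)
      (by simp; omega)).mono (by simp) (by simp; omega)
  have hlen : 2 * k + 1 ≤ L.length := by
    have := h.length_le
    simp only [List.length_append, List.length_cons] at this
    omega
  have hU₀ : 0 < U.length := by
    have := hL.lt_add_of_hasPeriodOn hV hk₀ (by omega)
    omega
  exact ⟨hlen, U.length, hU₀, by omega, hU, hV⟩

theorem SquareFree.almostSqPrefixLengths_subset (hL : SquareFree L) :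
    almostSqPrefixLengths L ⊆
      (2 * · + 1) '' insert 0 ({k | InsertionPrefix L k} ∪ {k | DeletionPrefix L k}) := by
  rintro _ ⟨W, W', ⟨U, V, x, rfl, rfl⟩ | ⟨U, V, x, rfl, rfl⟩, rfl, hpre⟩
  all_goals
    refine ⟨U.length + V.length, ?_, by simp only [List.length_append, List.length_cons]; omega⟩
    rcases Nat.eq_zero_or_pos (U.length + V.length) with hk | hk
    · exact .inl hk
  · exact .inr (insertionPrefix_or_deletionPrefix_of_prefix hpre rfl hk)
  · exact .inr (.inr (hL.deletionPrefix_of_prefix hpre rfl hk))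

end AlmostSquarePrefixes

section Counting

theorem logb_add_one_le_logb {r x y : ℝ} (hr : 1 < r) (hx : 0 < x) (hxy : r * x ≤ y) :
    Real.logb r x + 1 ≤ Real.logb r y := by
  have hr₀ : 0 < r := one_pos.trans hr
  calc Real.logb r x + 1 = Real.logb r (r * x) := by
        rw [Real.logb_mul hr₀.ne' hx.ne', Real.logb_self_eq_one hr, add_comm]
    _ ≤ Real.logb r y := Real.logb_le_logb_of_le hr (by positivity) hxy

theorem logb_le_logb_of_base_le {r r' x : ℝ} (hr : 1 < r) (hrr' : r ≤ r') (hx : 1 ≤ x) :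
    Real.logb r' x ≤ Real.logb r x :=
  div_le_div_of_nonneg_left (Real.log_nonneg hx) (Real.log_pos hr)
    (Real.log_le_log (one_pos.trans hr) hrr')

theorem ncard_le_one_add_logb {ι : Type*} [LinearOrder ι] {S : Set ι} {f : ι → ℝ} {r M : ℝ}
    (hr : 1 < r) (hM : 1 ≤ M) (hf : ∀ i ∈ S, f i ∈ Set.Icc 1 M)
    (hgrowth : ∀ i ∈ S, ∀ j ∈ S, i < j → r * f i ≤ f j) :
    (S.ncard : ℝ) ≤ 1 + Real.logb r M := by
  have floor_strictMono : StrictMonoOn (fun i => ⌊Real.logb r (f i)⌋₊) S := by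
    intro i hi j hj hij
    have hfi := (hf i hi).1
    rw [← Nat.add_one_le_iff, ← Nat.floor_add_one (Real.logb_nonneg hr hfi)]
    exact Nat.floor_le_floor (logb_add_one_le_logb hr (by linarith) (hgrowth i hi j hj hij))
  have floor_le : ∀ i ∈ S, ⌊Real.logb r (f i)⌋₊ ∈ Set.Iic ⌊Real.logb r M⌋₊ := fun i hi =>
    Nat.floor_le_floor
      (Real.logb_le_logb_of_le hr (one_pos.trans_le (hf i hi).1) (hf i hi).2)
  have hcard : S.ncard ≤ ⌊Real.logb r M⌋₊ + 1 := by
    simpa using Set.ncard_le_ncard_of_injOn _ floor_le floor_strictMono.injOn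
  calc (S.ncard : ℝ) ≤ ⌊Real.logb r M⌋₊ + 1 := by exact_mod_cast hcard
    _ ≤ 1 + Real.logb r M := by linarith [Nat.floor_le (Real.logb_nonneg hr hM)]

theorem ncard_le_one_add_logb_half {S : Set ℕ} {m n : ℕ} (hS : S ⊆ Set.Icc 1 (m / 2))
    (hgrowth : ∀ k ∈ S, ∀ l ∈ S, k < l → 4 * k ≤ 3 * l) (hmn : m ≤ n) (hn : 2 ≤ n) :
    (S.ncard : ℝ) ≤ 1 + Real.logb (4 / 3) (n / 2) := by
  have hn' : (2 : ℝ) ≤ n := by exact_mod_cast hn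
  refine ncard_le_one_add_logb (f := Nat.cast) (by norm_num) (by linarith) (fun k hk => ?_)
    fun k hk l hl hkl => ?_
  · obtain ⟨hk₁, hkm⟩ := hS hk
    have hkn : (2 * k : ℝ) ≤ n := by exact_mod_cast (by omega : 2 * k ≤ n)
    exact ⟨by exact_mod_cast hk₁, by linarith⟩
  · have : (4 * k : ℝ) ≤ 3 * l := by exact_mod_cast hgrowth k hk l hl hkl
    linarith

theorem card_setOf_fst_lt_le {α : Type*} (n : ℕ) (S : ℕ → Set α) :
    Nat.card {x : ℕ × α | x.1 < n ∧ x.2 ∈ S x.1} ≤ ∑ p ∈ Finset.range n, (S p).ncard := by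
  have fibers : {x : ℕ × α | x.1 < n ∧ x.2 ∈ S x.1} =
      ⋃ p ∈ Finset.range n, Prod.mk p '' S p := by
    ext ⟨p, a⟩
    simp [and_comm]
  calc Nat.card {x : ℕ × α | x.1 < n ∧ x.2 ∈ S x.1}
      = (⋃ p ∈ Finset.range n, Prod.mk p '' S p).ncard := by
        rw [fibers, Nat.card_coe_set_eq]
    _ ≤ ∑ p ∈ Finset.range n, (Prod.mk p '' S p).ncard := Finset.set_ncard_biUnion_le _ _
    _ = ∑ p ∈ Finset.range n, (S p).ncard := by
        simp only [Set.ncard_image_of_injective _ (Prod.mk_right_injective _)]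

end Counting

theorem SquareFree.ncard_almostSqPrefixLengths_lt {A : Type*} {L : List A} (hL : SquareFree L)
    {n : ℕ} (hLn : L.length ≤ n) (hn : 2 ≤ n) :
    ((almostSqPrefixLengths L).ncard : ℝ) < 2 * Real.logb (4 / 3) n := by
  set I := {k | InsertionPrefix L k}
  set D := {k | DeletionPrefix L k}
  have hI : I ⊆ Set.Icc 1 (L.length / 2) := fun _ hk => hk.mem_Icc
  have hD : D ⊆ Set.Icc 1 (L.length / 2) := fun _ hk => hk.mem_Icc
  have hIcard : (I.ncard : ℝ) ≤ 1 + Real.logb (4 / 3) (n / 2) :=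
    ncard_le_one_add_logb_half hI (fun _ hk _ hl => hk.four_mul_le hL hl) hLn hn
  have hDcard : (D.ncard : ℝ) ≤ 1 + Real.logb (4 / 3) (n / 2) :=
    ncard_le_one_add_logb_half hD (fun _ hk _ hl => hk.four_mul_le hL hl) hLn hn
  have hfin : (insert 0 (I ∪ D)).Finite :=
    ((Set.finite_Icc _ _).subset (Set.union_subset hI hD)).insert 0
  have hcard : (almostSqPrefixLengths L).ncard ≤ I.ncard + D.ncard + 1 :=
    calc (almostSqPrefixLengths L).ncard
        ≤ ((2 * · + 1) '' insert 0 (I ∪ D)).ncard :=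
          Set.ncard_le_ncard hL.almostSqPrefixLengths_subset (hfin.image _)
      _ ≤ (insert 0 (I ∪ D)).ncard := Set.ncard_image_le hfin
      _ ≤ (I ∪ D).ncard + 1 := Set.ncard_insert_le _ _
      _ ≤ I.ncard + D.ncard + 1 := by gcongr; exact Set.ncard_union_le _ _
  have hcard' : ((almostSqPrefixLengths L).ncard : ℝ) ≤ I.ncard + D.ncard + 1 := by
    exact_mod_cast hcard
  have logb_half : Real.logb (4 / 3) (n / 2) = Real.logb (4 / 3) n - Real.logb (4 / 3) 2 :=
    Real.logb_div (by positivity) two_ne_zero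
  have two_le_logb_two : 2 ≤ Real.logb (4 / 3) 2 := by
    rw [Real.le_logb_iff_rpow_le (by norm_num) two_pos]
    norm_num
  linarith

theorem stmt17_general {A : Type*} {Q : List A} (hQ : SquareFree Q) {n : ℕ}
    (hn : Q.length = n) (hn2 : 2 ≤ n) :
    (Nat.card {pl : ℕ × ℕ | pl.1 < n ∧ ∃ W W' : List A, AlmostSq W W' ∧
        (W ++ W').length = pl.2 ∧ (W ++ W') <+: Q.drop pl.1} : ℝ)
      < 2 * n * Real.logb (4 / 3) n := by
  have position_lt (p : ℕ) :
      ((almostSqPrefixLengths (Q.drop p)).ncard : ℝ) < 2 * Real.logb (4 / 3) n :=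
    (hQ.of_infix (List.drop_suffix p Q).isInfix).ncard_almostSqPrefixLengths_lt
      (by simp [hn]) hn2
  calc _ ≤ ∑ p ∈ Finset.range n, ((almostSqPrefixLengths (Q.drop p)).ncard : ℝ) := by
        exact_mod_cast card_setOf_fst_lt_le n fun p => almostSqPrefixLengths (Q.drop p)
    _ < ∑ _p ∈ Finset.range n, 2 * Real.logb (4 / 3) n :=
        Finset.sum_lt_sum_of_nonempty (Finset.nonempty_range_iff.2 (by omega))
          fun p _ => position_lt p
    _ = 2 * n * Real.logb (4 / 3) n := by
        rw [Finset.sum_const, Finset.card_range, nsmul_eq_mul]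
        ring

theorem stmt17 (A : Type*) (Q : List A) (hQ : SquareFree Q) (n : ℕ)
    (hn : Q.length = n) (hn2 : 2 ≤ n) :
    (Nat.card {pl : ℕ × ℕ | pl.1 < n ∧ ∃ W W' : List A, AlmostSq W W' ∧
        (W ++ W').length = pl.2 ∧ (W ++ W') <+: Q.drop pl.1} : ℝ)
      < 2 * n * Real.logb (5 / 4) n := by
  have hlog : Real.logb (4 / 3) n ≤ Real.logb (5 / 4) n :=
    logb_le_logb_of_base_le (by norm_num) (by norm_num) (by exact_mod_cast one_le_two.trans hn2)
  exact (stmt17_general hQ hn hn2).trans_le (by gcongr)
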